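/- Let n and k be positive integers with k ≡ 0 (mod 3), k ≥ 3 and n ≥ k+4, and let G be a potted graph of order n whose cycle has length k. Then the number m(G) of maximum dissociation sets of G satisfies: m(G) ≤ 3^{(n−k)/3} + (n−k)/3 + 1 if n ≡ 0 (mod 3); m(G) ≤ 3^{(n−k−1)/3} + 1 if n ≡ 1 (mod 3); and m(G) ≤ 3^{(n−k−2)/3} if n ≡ 2 (mod 3). -/

import Mathlib

open scoped Classical

variable {V : Type*}

/-- The number of neighbors of `v` that lie inside the finite set `s`,
i.e. the degree of `v` in the subgraph induced by `s` (when `v ∈ s`). -/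
noncomputable def nbrCount (G : SimpleGraph V) (s : Finset V) (v : V) : ℕ :=
  {w ∈ (s : Set V) | G.Adj v w}.ncard

/-- `s` is a dissociation set of `G`: the subgraph induced by `s` has maximum degree at most 1. -/
def IsDissoc (G : SimpleGraph V) (s : Finset V) : Prop :=
  ∀ v ∈ s, nbrCount G s v ≤ 1

/-- The dissociation number of the subgraph of `G` induced by `A`. -/
noncomputable def dissNumOn (G : SimpleGraph V) (A : Set V) : ℕ :=
  sSup {n | ∃ s : Finset V, ↑s ⊆ A ∧ IsDissoc G s ∧ s.card = n}

/-- `s` is a maximum dissociation set of the subgraph of `G` induced by `A`. -/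
def IsMaxDissocOn (G : SimpleGraph V) (A : Set V) (s : Finset V) : Prop :=
  ↑s ⊆ A ∧ IsDissoc G s ∧ s.card = dissNumOn G A

/-- The number of maximum dissociation sets of the subgraph of `G` induced by `A`. -/
noncomputable def numMaxDissocOn (G : SimpleGraph V) (A : Set V) : ℕ :=
  Nat.card {s : Finset V // IsMaxDissocOn G A s}

/-- The dissociation number of `G`. -/
noncomputable def dissNum (G : SimpleGraph V) : ℕ :=
  dissNumOn G Set.univ

/-- `s` is a maximum dissociation set of `G`. -/
def IsMaxDissoc (G : SimpleGraph V) (s : Finset V) : Prop :=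
  IsMaxDissocOn G Set.univ s

/-- The number `m(G)` of maximum dissociation sets of `G`. -/
noncomputable def numMaxDissoc (G : SimpleGraph V) : ℕ :=
  numMaxDissocOn G Set.univ

/-- `m(G[A], u⁻)`: maximum dissociation sets of `G[A]` not containing `u`. -/
noncomputable def numMaxDissocOnAway (G : SimpleGraph V) (A : Set V) (u : V) : ℕ :=
  Nat.card {s : Finset V // IsMaxDissocOn G A s ∧ u ∉ s}

/-- `m(G[A], u⁰)`: maximum dissociation sets of `G[A]` containing `u` with induced degree 0. -/
noncomputable def numMaxDissocOnDeg0 (G : SimpleGraph V) (A : Set V) (u : V) : ℕ :=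
  Nat.card {s : Finset V // IsMaxDissocOn G A s ∧ u ∈ s ∧ nbrCount G s u = 0}

/-- `m(G[A], u¹)`: maximum dissociation sets of `G[A]` containing `u` with induced degree 1. -/
noncomputable def numMaxDissocOnDeg1 (G : SimpleGraph V) (A : Set V) (u : V) : ℕ :=
  Nat.card {s : Finset V // IsMaxDissocOn G A s ∧ u ∈ s ∧ nbrCount G s u = 1}

/-- `m(G, u⁻)`. -/
noncomputable def numMaxDissocAway (G : SimpleGraph V) (u : V) : ℕ :=
  numMaxDissocOnAway G Set.univ u

/-- `m(G, u⁰)`. -/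
noncomputable def numMaxDissocDeg0 (G : SimpleGraph V) (u : V) : ℕ :=
  numMaxDissocOnDeg0 G Set.univ u

/-- `m(G, u¹)`. -/
noncomputable def numMaxDissocDeg1 (G : SimpleGraph V) (u : V) : ℕ :=
  numMaxDissocOnDeg1 G Set.univ u

/-- `m̄`: relative count, `numMaxDissocOn G B` if `dissNumOn G B = dissNumOn G A`, else 0. -/
noncomputable def mbar (G : SimpleGraph V) (A B : Set V) : ℕ :=
  if dissNumOn G B = dissNumOn G A then numMaxDissocOn G B else 0

/-- `G` is a potted graph whose (unique) cycle has length `k`: `G` is connected and unicyclic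
(equivalently, connected with as many edges as vertices), and its cycle has length `k` and
contains a unique vertex of degree larger than 2. -/
def IsPotted (G : SimpleGraph V) (k : ℕ) : Prop :=
  G.Connected ∧ G.edgeSet.ncard = Nat.card V ∧
    ∃ (v : V) (c : G.Walk v v), c.IsCycle ∧ c.length = k ∧
      ∃! u, u ∈ c.support ∧ 2 < (G.neighborSet u).ncard

/-!
A dissociation set contains at most two of any three consecutive vertices of the cycle, so a maximum
one misses exactly the cycle vertices of one residue class modulo 3. If that class contains the
attachment vertex `v`, what remains is a largest dissociation set of the pendant tree, rooted at
`v`, that avoids the root; otherwise it is a dissociation set of one vertex more that contains the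
root as an isolated vertex. Hence `m(G) ≤ E + 2 * Z`, where `E` and `Z` count these two kinds of
sets.

The counts are bounded by induction on rooted trees. Hanging one rooted tree below the root of
another multiplies the polynomials counting dissociation sets by cardinality, separately for each
state of the root (absent, isolated, matched), and only four shapes of their leading terms occur.
-/

open Polynomial

section Counts

/-- The power of three to which every count for `r` vertices is compared. -/
def tripling (r : ℕ) : ℕ := 3 ^ (r / 3)

/-- The lower-order term in the bound on `m(G)` for a potted graph with `r` vertices off its cycle,
whose leading term is `tripling r`. -/
def surplus (r : ℕ) : ℕ := if r % 3 = 0 then r / 3 + 1 else if r % 3 = 1 then 1 else 0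

/-- The part of `surplus r` that is left over in the bounds on `3 * E + Z` and `3 * E + O` below. -/
def unitDefect (r : ℕ) : ℕ := if r % 3 = 0 then 1 else 0

local notation "φ" => tripling

local notation "δ" => unitDefect

theorem tripling_pos (r : ℕ) : 0 < φ r := by unfold tripling; positivity

theorem tripling_add_three (r : ℕ) : φ (r + 3) = 3 * φ r := by
  rw [tripling, tripling, Nat.add_div_right r (by norm_num), pow_succ, mul_comm]

theorem tripling_mono : Monotone tripling := fun _ _ h =>
  Nat.pow_le_pow_right (by norm_num) (Nat.div_le_div_right h)

theorem tripling_succ_le (r : ℕ) : φ (r + 1) ≤ 3 * φ r :=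
  (tripling_mono (by omega)).trans (tripling_add_three r).le

theorem tripling_mul_le (a b : ℕ) : φ a * φ b ≤ φ (a + b) := by
  rw [tripling, tripling, ← pow_add]
  exact Nat.pow_le_pow_right (by norm_num) (by omega)

theorem surplus_le_surplus_add_three (r : ℕ) : surplus r ≤ surplus (r + 3) := by
  unfold surplus; split_ifs <;> omega

theorem surplus_add_unitDefect_le (r : ℕ) : surplus r + δ r ≤ surplus (r + 3) := by
  unfold surplus unitDefect; split_ifs <;> omega

theorem unitDefect_add_three (r : ℕ) : δ (r + 3) = δ r := by
  unfold unitDefect; split_ifs <;> omega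

theorem unitDefect_le_surplus_succ (r : ℕ) : δ r ≤ surplus (r + 1) := by
  unfold surplus unitDefect; split_ifs <;> omega

theorem unitDefect_le_surplus_add_four (r : ℕ) : δ r ≤ surplus (r + 4) := by
  unfold surplus unitDefect; split_ifs <;> omega

/-- Bounds on the numbers `E`, `Z` and `O` of largest dissociation sets of a rooted tree on `r + 1`
vertices that avoid the root, contain it as an isolated vertex, and contain it with a neighbor, in
the case where the latter two kinds have one more vertex than the first. The field `total` is the
bound of the theorem; `leaf_child`, `pair_child` and `leaf_root` are what remains of it after
hanging a single vertex or a path on two vertices below the root, or the tree below a single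
vertex. -/
structure FreeBounds (r E Z O : ℕ) : Prop where
  avoid : E ≤ φ r
  isolated : 3 * Z ≤ φ r
  present : 3 * (Z + O) ≤ 2 * φ r
  total : E + 2 * Z ≤ φ r + surplus r
  pair_child : 3 * E + 2 * Z + O ≤ 3 * φ r + surplus (r + 3)
  leaf_child : 3 * E + Z ≤ 3 * φ r + δ r
  leaf_root : E + 4 * Z + 3 * O ≤ 3 * φ r + surplus (r + 3)

/-- The counts of a rooted tree on `r + 1` vertices in the case described at `FreeBounds`: either
those of a single vertex, or subject to these bounds. -/
def IsFree (r E Z O : ℕ) : Prop :=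
  0 < E ∧ 0 < Z ∧ (r = 0 ∧ E = 1 ∧ Z = 1 ∧ O = 0 ∨ FreeBounds r E Z O)

/-- The analogue of `FreeBounds` for a rooted tree on `r + 2` vertices in which the largest
dissociation sets contain the root with a neighbor, while `E` and `Z` count the sets of one vertex
less that avoid the root or contain it as an isolated vertex. -/
structure HalfBounds (r E Z O : ℕ) : Prop where
  avoid : E ≤ φ r
  isolated : Z ≤ φ r
  matched : 3 * O ≤ φ r
  total : E + Z + O ≤ 2 * φ r
  leaf_child : 3 * E + Z + O ≤ 3 * φ r + surplus (r + 3)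
  pair_child : 3 * E + O ≤ 3 * φ r + δ r

/-- The counts of a rooted tree on `r + 2` vertices in the case described at `HalfBounds`: either
those of a path on two vertices, or subject to these bounds. -/
def IsHalf (r E Z O : ℕ) : Prop :=
  0 < E ∧ 0 < O ∧ (r = 0 ∧ E = 1 ∧ Z = 1 ∧ O = 1 ∨ HalfBounds r E Z O)

/-- The analogue of `FreeBounds` for a rooted tree on `n` vertices with a largest dissociation set
avoiding the root; `Z` and `O`, possibly zero, count the sets of the same cardinality that contain
the root. The field `weighted` is the bound of the theorem for the tree hung below a single
vertex. -/
structure IsTied (n E Z O : ℕ) : Prop where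
  pos : 0 < E
  avoid : 3 * E ≤ φ n
  isolated : 3 * Z ≤ φ n
  leaf_child : 3 * E + Z ≤ φ n + δ n
  weighted : 3 * E + Z + O ≤ φ n + surplus n
  total : n = 3 ∧ E = 1 ∧ Z = 1 ∧ O = 1 ∨ 3 * (E + Z + O) ≤ 2 * φ n

/-- The analogue of `IsTied` when no largest dissociation set contains the root as an isolated
vertex, where weaker bounds suffice. -/
structure IsBlocked (n E O : ℕ) : Prop where
  pos : 0 < E
  avoid : 3 * E ≤ φ n
  weighted : 3 * E + O ≤ φ n + surplus n
  total : n = 3 ∧ E = 1 ∧ O = 2 ∨ 3 * (E + O) ≤ 2 * φ n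

/-- The common part of `IsTied` and `IsBlocked`, sufficient for a tree hung below another one: `m`
is the number of all largest dissociation sets, `e` and `z` count those that avoid the root or
contain it as an isolated vertex. -/
structure IsFlat (n m e z : ℕ) : Prop where
  pos_total : 0 < m
  pos : 0 < e
  avoid : 3 * e ≤ φ n
  isolated : 3 * z ≤ φ n
  weighted : m + 2 * e ≤ φ n + surplus n
  total : n = 3 ∧ m = 3 ∧ e = 1 ∧ z ≤ 1 ∨ 3 * m ≤ 2 * φ n

variable {r r' n n' E E' Z Z' O O' m e z : ℕ}

theorem IsTied.isFlat (h : IsTied n E Z O) : IsFlat n (E + Z + O) E Z where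
  pos_total := by have := h.pos; omega
  pos := h.pos
  avoid := h.avoid
  isolated := h.isolated
  weighted := by linarith [h.weighted]
  total := by rcases h.total with h | h <;> omega

theorem IsBlocked.isFlat (h : IsBlocked n E O) : IsFlat n (E + O) E 0 where
  pos_total := by have := h.pos; omega
  pos := h.pos
  avoid := h.avoid
  isolated := by omega
  weighted := by linarith [h.weighted]
  total := by rcases h.total with h | h <;> omega

theorem IsFree.join_free (h : IsFree r E Z O) (h' : IsFree r' E' Z' O') :
    IsHalf (r + r') (E * (Z' + O')) (Z * E') (Z * Z') := by
  obtain ⟨hE, hZ, h⟩ := h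
  obtain ⟨hE', hZ', h'⟩ := h'
  refine ⟨by positivity, by positivity, ?_⟩
  rcases h with ⟨rfl, rfl, rfl, rfl⟩ | h <;> rcases h' with ⟨rfl, rfl, rfl, rfl⟩ | h'
  · simp
  · right
    obtain ⟨havoid', hisolated', hpresent', -, -, -, hleafRoot'⟩ := h'
    simp only [zero_add, one_mul]
    constructor <;> omega
  · right
    obtain ⟨havoid, hisolated, -, -, hpairChild, hleafChild, -⟩ := h
    simp only [add_zero, mul_one]
    constructor <;> omega
  · right
    obtain ⟨havoid, hisolated, -, -, -, -, -⟩ := h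
    obtain ⟨havoid', hisolated', hpresent', -, -, -, -⟩ := h'
    have := tripling_mul_le r r'
    have havoid_present := Nat.mul_le_mul havoid hpresent'
    have hisolated_avoid := Nat.mul_le_mul hisolated havoid'
    have hisolated_isolated := Nat.mul_le_mul hisolated hisolated'
    constructor <;> linarith

theorem IsFree.join_half (h : IsFree r E Z O) (h' : IsHalf r' E' Z' O') :
    IsTied (r + r' + 3) (E * O') (Z * E') (O * E' + Z * Z') := by
  obtain ⟨hE, hZ, h⟩ := h
  obtain ⟨hE', hO', h'⟩ := h'
  have hpos : 0 < E * O' := by positivity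
  have hφ := tripling_add_three (r + r')
  have hδ := unitDefect_add_three (r + r')
  rcases h with ⟨rfl, rfl, rfl, rfl⟩ | h <;> rcases h' with ⟨rfl, rfl, rfl, rfl⟩ | h'
  · constructor <;> decide
  · obtain ⟨havoid', -, hmatched', htotal', hleafChild', hpairChild'⟩ := h'
    simp only [zero_add, zero_mul, one_mul] at hφ hδ ⊢
    constructor <;> omega
  · obtain ⟨havoid, hisolated, hpresent, -, hpairChild, hleafChild, -⟩ := h
    simp only [add_zero, mul_one] at hφ hδ ⊢
    constructor <;> omega
  · obtain ⟨havoid, hisolated, hpresent, -, -, -, -⟩ := h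
    obtain ⟨havoid', hisolated', hmatched', -, -, -⟩ := h'
    have := tripling_mul_le r r'
    have havoid_matched := Nat.mul_le_mul havoid hmatched'
    have hpresent_avoid := Nat.mul_le_mul hpresent havoid'
    have hisolated_isolated := Nat.mul_le_mul hisolated hisolated'
    have hisolated_avoid := Nat.mul_le_mul hisolated havoid'
    constructor <;> (try right) <;> linarith

theorem FreeBounds.of_three_mul_avoid_le (hE : 3 * E ≤ 2 * φ r) (hZ : 3 * Z ≤ φ r)
    (hP : 3 * (Z + O) ≤ 2 * φ r) (h : E + 2 * Z ≤ φ r + surplus r) : FreeBounds r E Z O := by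
  constructor <;> omega

theorem IsFree.join_flat (h : IsFree r E Z O) (h' : IsFlat n m e z) :
    IsFree (r + n) (E * m) (Z * e) (O * e + Z * z) := by
  obtain ⟨hE, hZ, h⟩ := h
  obtain ⟨hm, he, havoid', hisolated', hweighted', htotal'⟩ := h'
  refine ⟨by positivity, by positivity, .inr ?_⟩
  have hφ := tripling_add_three r
  have hδ := unitDefect_add_three r
  have hsδ := surplus_add_unitDefect_le (r + 3)
  have hs := surplus_le_surplus_add_three r
  rcases h with ⟨rfl, rfl, rfl, rfl⟩ | h <;> rcases htotal' with ⟨rfl, rfl, rfl, hz⟩ | htotal'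
  · interval_cases z <;> constructor <;> decide
  · simp only [zero_add, zero_mul, one_mul]
    exact .of_three_mul_avoid_le htotal' (by omega) (by omega) (by omega)
  · obtain ⟨havoid, hisolated, hpresent, htotal, hpairChild, hleafChild, hleafRoot⟩ := h
    have : Z * z ≤ Z * 1 := Nat.mul_le_mul le_rfl hz
    constructor <;> omega
  · obtain ⟨havoid, hisolated, hpresent, -, -, -, -⟩ := h
    have := tripling_mul_le r n
    have havoid_total := Nat.mul_le_mul havoid htotal'
    have hisolated_avoid := Nat.mul_le_mul hisolated havoid'
    have hisolated_isolated := Nat.mul_le_mul hisolated hisolated'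
    have hpresent_avoid := Nat.mul_le_mul hpresent havoid'
    apply FreeBounds.of_three_mul_avoid_le <;> linarith

theorem IsHalf.join_free (h : IsHalf r E Z O) (h' : IsFree r' E' Z' O') :
    IsBlocked (r + r' + 3) (E * (Z' + O')) (O * E' + Z * Z') := by
  obtain ⟨hE, hZ, h⟩ := h
  obtain ⟨hE', hZ', h'⟩ := h'
  have hpos : 0 < E * (Z' + O') := by positivity
  have hφ := tripling_add_three (r + r')
  rcases h with ⟨rfl, rfl, rfl, rfl⟩ | h <;> rcases h' with ⟨rfl, rfl, rfl, rfl⟩ | h'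
  · constructor <;> decide
  · obtain ⟨havoid', hisolated', hpresent', -, -, -, hleafRoot'⟩ := h'
    simp only [zero_add, one_mul] at hφ ⊢
    constructor <;> omega
  · obtain ⟨havoid, -, -, htotal, hleafChild, -⟩ := h
    simp only [add_zero, mul_one] at hφ ⊢
    constructor <;> omega
  · obtain ⟨havoid, hisolated, hmatched, -, -, -⟩ := h
    obtain ⟨havoid', hisolated', hpresent', -, -, -, -⟩ := h'
    have := tripling_mul_le r r'
    have havoid_present := Nat.mul_le_mul havoid hpresent'
    have hmatched_avoid := Nat.mul_le_mul hmatched havoid'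
    have hisolated_isolated := Nat.mul_le_mul hisolated hisolated'
    constructor <;> (try right) <;> linarith

theorem IsHalf.join_half (h : IsHalf r E Z O) (h' : IsHalf r' E' Z' O') :
    IsBlocked (r + r' + 4) (E * O') (O * E') := by
  obtain ⟨hE, hO, h⟩ := h
  obtain ⟨hE', hO', h'⟩ := h'
  have hpos : 0 < E * O' := by positivity
  have hφ : 3 * φ (r + r') ≤ φ (r + r' + 4) :=
    (tripling_add_three _).ge.trans (tripling_mono (by omega))
  rcases h with ⟨rfl, rfl, rfl, rfl⟩ | h <;> rcases h' with ⟨rfl, rfl, rfl, rfl⟩ | h'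
  · constructor <;> decide
  · obtain ⟨havoid', -, hmatched', htotal', -, -⟩ := h'
    simp only [zero_add, one_mul] at hφ ⊢
    constructor <;> omega
  · obtain ⟨havoid, -, -, htotal, -, hpairChild⟩ := h
    have := unitDefect_le_surplus_add_four r
    simp only [add_zero, mul_one] at hφ ⊢
    constructor <;> omega
  · obtain ⟨havoid, -, hmatched, -, -, -⟩ := h
    obtain ⟨havoid', -, hmatched', -, -, -⟩ := h'
    have := tripling_mul_le r r'
    have havoid_matched := Nat.mul_le_mul havoid hmatched'
    have hmatched_avoid := Nat.mul_le_mul hmatched havoid'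
    constructor <;> (try right) <;> linarith

theorem IsHalf.join_flat (h : IsHalf r E Z O) (h' : IsFlat n m e z) :
    IsHalf (r + n) (E * m) (Z * e) (O * e) := by
  obtain ⟨hE, hO, h⟩ := h
  obtain ⟨hm, he, havoid', hisolated', hweighted', htotal'⟩ := h'
  refine ⟨by positivity, by positivity, .inr ?_⟩
  have hφ := tripling_add_three r
  have hδ := unitDefect_add_three r
  have hsδ := surplus_add_unitDefect_le (r + 3)
  have hs := surplus_le_surplus_add_three (r + 3)
  rcases h with ⟨rfl, rfl, rfl, rfl⟩ | h <;> rcases htotal' with ⟨rfl, rfl, rfl, -⟩ | htotal'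
  · constructor <;> decide
  · simp only [zero_add, one_mul]
    constructor <;> omega
  · obtain ⟨havoid, hisolated, hmatched, htotal, hleafChild, hpairChild⟩ := h
    constructor <;> omega
  · obtain ⟨havoid, hisolated, hmatched, -, -, -⟩ := h
    have := tripling_mul_le r n
    have havoid_total := Nat.mul_le_mul havoid htotal'
    have hisolated_avoid := Nat.mul_le_mul hisolated havoid'
    have hmatched_avoid := Nat.mul_le_mul hmatched havoid'
    constructor <;> linarith

theorem IsTied.join_free (h : IsTied n E Z O) (h' : IsFree r' E' Z' O') :
    IsBlocked (n + r' + 1) (E * (Z' + O')) (Z * Z') := by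
  obtain ⟨hE, havoid, hisolated, hleafChild, -, -⟩ := h
  obtain ⟨hE', hZ', h'⟩ := h'
  have hpos : 0 < E * (Z' + O') := by positivity
  have hφ : φ (n + r') ≤ φ (n + r' + 1) := tripling_mono (by omega)
  rcases h' with ⟨rfl, rfl, rfl, rfl⟩ | h'
  · have := unitDefect_le_surplus_succ n
    simp only [add_zero, mul_one] at hφ ⊢
    constructor <;> omega
  · obtain ⟨-, hisolated', hpresent', -, -, -, -⟩ := h'
    have := tripling_mul_le n r'
    have havoid_present := Nat.mul_le_mul havoid hpresent'
    have hisolated_isolated := Nat.mul_le_mul hisolated hisolated'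
    constructor <;> (try right) <;> linarith

theorem IsTied.join_flat (h : IsTied n E Z O) (h' : IsFlat n' m e z) :
    IsTied (n + n') (E * m) (Z * e) (O * e + Z * z) := by
  obtain ⟨hE, havoid, hisolated, hleafChild, hweighted, htotal⟩ := h
  obtain ⟨hm, he, havoid', hisolated', hweighted', htotal'⟩ := h'
  have hpos : 0 < E * m := by positivity
  have hφ := tripling_add_three n
  have hδ := unitDefect_add_three n
  have hsδ := surplus_add_unitDefect_le n
  rcases htotal' with ⟨rfl, rfl, rfl, hz⟩ | htotal'
  · have : Z * z ≤ Z * 1 := Nat.mul_le_mul le_rfl hz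
    constructor <;> omega
  · have hZO : 3 * (Z + O) ≤ 2 * φ n := by
      rcases htotal with ⟨rfl, rfl, rfl, rfl⟩ | htotal
      · decide
      · omega
    have := tripling_mul_le n n'
    have havoid_total := Nat.mul_le_mul havoid htotal'
    have hisolated_avoid := Nat.mul_le_mul hisolated havoid'
    have hisolated_isolated := Nat.mul_le_mul hisolated hisolated'
    have hZO_avoid := Nat.mul_le_mul hZO havoid'
    constructor <;> (try right) <;> linarith

theorem IsBlocked.join_flat (h : IsBlocked n E O) (h' : IsFlat n' m e z) :
    IsBlocked (n + n') (E * m) (O * e) := by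
  obtain ⟨hE, havoid, hweighted, htotal⟩ := h
  obtain ⟨hm, he, havoid', hisolated', hweighted', htotal'⟩ := h'
  have hpos : 0 < E * m := by positivity
  have hφ := tripling_add_three n
  have hs := surplus_le_surplus_add_three n
  rcases htotal' with ⟨rfl, rfl, rfl, -⟩ | htotal'
  · constructor <;> omega
  · have hO : 3 * O ≤ 2 * φ n := by
      rcases htotal with ⟨rfl, rfl, rfl⟩ | htotal
      · decide
      · omega
    have := tripling_mul_le n n'
    have havoid_total := Nat.mul_le_mul havoid htotal'
    have hO_avoid := Nat.mul_le_mul hO havoid'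
    constructor <;> (try right) <;> linarith

theorem IsFree.present_le (h : IsFree r E Z O) : Z + O ≤ φ r := by
  rcases h.2.2 with ⟨rfl, -, rfl, rfl⟩ | h
  · decide
  · have := h.present; omega

theorem IsHalf.matched_le (h : IsHalf r E Z O) : O ≤ φ r := by
  rcases h.2.2 with ⟨rfl, -, -, rfl⟩ | h
  · decide
  · have := h.matched; omega

theorem IsBlocked.of_mul (hE : 0 < E) (h : 3 * E ≤ φ n) (hm : 0 < m) (h' : m ≤ φ r)
    (hn : n + r ≤ n') : IsBlocked n' (E * m) 0 := by
  have hφ : 3 * (E * m) ≤ φ n' := calc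
    3 * (E * m) = 3 * E * m := by ring
    _ ≤ φ n * φ r := Nat.mul_le_mul h h'
    _ ≤ φ (n + r) := tripling_mul_le n r
    _ ≤ φ n' := tripling_mono hn
  exact ⟨by positivity, hφ, by omega, by omega⟩

end Counts

/-- `TopCoeff p d c`: the polynomial `p` has degree at most `d`, and `c` (possibly zero) is its
coefficient in degree `d`. -/
structure TopCoeff (p : ℕ[X]) (d c : ℕ) : Prop where
  natDegree_le : p.natDegree ≤ d
  coeff_eq : p.coeff d = c

namespace TopCoeff

variable {p p' : ℕ[X]} {d d' e c c' : ℕ}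

theorem of_lt (h : TopCoeff p d c) (hd : d < e) : TopCoeff p e 0 where
  natDegree_le := h.1.trans hd.le
  coeff_eq := coeff_eq_zero_of_natDegree_lt (h.1.trans_lt hd)

theorem mul (h : TopCoeff p d c) (h' : TopCoeff p' d' c') (he : e = d + d' := by omega) :
    TopCoeff (p * p') e (c * c') where
  natDegree_le := he ▸ natDegree_mul_le_of_le h.1 h'.1
  coeff_eq := by rw [he, coeff_mul_add_eq_of_natDegree_le h.1 h'.1, h.2, h'.2]

theorem mul_of_lt (h : TopCoeff p d c) (h' : TopCoeff p' d' c') (he : d + d' < e := by omega) :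
    TopCoeff (p * p') e 0 :=
  (h.mul h' rfl).of_lt he

theorem add (h : TopCoeff p d c) (h' : TopCoeff p' d c') : TopCoeff (p + p') d (c + c') where
  natDegree_le := natDegree_add_le_of_degree_le h.1 h'.1
  coeff_eq := by rw [coeff_add, h.2, h'.2]

theorem zero_add (h : TopCoeff p d 0) (h' : TopCoeff p' d c) : TopCoeff (p + p') d c := by
  simpa using h.add h'

theorem add_zero (h : TopCoeff p d c) (h' : TopCoeff p' d 0) : TopCoeff (p + p') d c :=
  h.add h'

end TopCoeff

/-- The four shapes of the top-degree parts of the polynomials `p`, `q`, `s` that count, by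
cardinality, the dissociation sets of a rooted tree on `N` vertices avoiding the root, containing
it as an isolated vertex, and containing it with a neighbor. -/
inductive TreeClass (N : ℕ) (p q s : ℕ[X]) : Prop
  | free {r d E Z O : ℕ} (hN : N = r + 1) (hp : TopCoeff p d E) (hq : TopCoeff q (d + 1) Z)
      (hs : TopCoeff s (d + 1) O) (h : IsFree r E Z O)
  | half {r d E Z O : ℕ} (hN : N = r + 2) (hp : TopCoeff p d E) (hq : TopCoeff q d Z)
      (hs : TopCoeff s (d + 1) O) (h : IsHalf r E Z O)
  | tied {d E Z O : ℕ} (hp : TopCoeff p d E) (hq : TopCoeff q d Z)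
      (hs : TopCoeff s d O) (h : IsTied N E Z O)
  | blocked {d E O : ℕ} (hp : TopCoeff p d E) (hq : TopCoeff q d 0)
      (hs : TopCoeff s d O) (h : IsBlocked N E O)

namespace TreeClass

variable {N N' r d E Z O m e z : ℕ} {p q s t p' q' s' : ℕ[X]}

theorem join_free (h : TreeClass N p q s) (hp' : TopCoeff p' d E)
    (hq' : TopCoeff q' (d + 1) Z) (hs' : TopCoeff s' (d + 1) O) (h' : IsFree r E Z O) :
    TreeClass (N + (r + 1)) (p * (p' + q' + s')) (q * p') (s * p' + q * q') := by
  have ht : TopCoeff (p' + q' + s') (d + 1) (Z + O) :=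
    ((hp'.of_lt d.lt_succ_self).zero_add hq').add hs'
  cases h with
  | free hN hp hq hs h =>
    exact .half (by omega) (hp.mul ht rfl) (hq.mul hp') (.zero_add (hs.mul_of_lt hp') (hq.mul hq'))
      (h.join_free h')
  | half hN hp hq hs h =>
    subst hN
    refine .blocked (hp.mul ht rfl) (hq.mul_of_lt hp') (.add (hs.mul hp') (hq.mul hq')) ?_
    convert h.join_free h' using 1; ring
  | tied hp hq hs h =>
    exact .blocked (hp.mul ht rfl) (hq.mul_of_lt hp') (.zero_add (hs.mul_of_lt hp') (hq.mul hq'))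
      (h.join_free h')
  | blocked hp hq hs h =>
    have hZO : 0 < Z + O := by have := h'.2.1; omega
    exact .blocked (hp.mul ht rfl) (hq.mul_of_lt hp')
      (.zero_add (hs.mul_of_lt hp') (by simpa using hq.mul hq' rfl))
      (.of_mul h.pos h.avoid hZO h'.present_le (by omega))

theorem join_half (h : TreeClass N p q s) (hp' : TopCoeff p' d E)
    (hq' : TopCoeff q' d Z) (hs' : TopCoeff s' (d + 1) O) (h' : IsHalf r E Z O) :
    TreeClass (N + (r + 2)) (p * (p' + q' + s')) (q * p') (s * p' + q * q') := by
  have ht : TopCoeff (p' + q' + s') (d + 1) O := ((hp'.add hq').of_lt d.lt_succ_self).zero_add hs'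
  cases h with
  | free hN hp hq hs h =>
    subst hN
    refine .tied (hp.mul ht rfl) (hq.mul hp') ((hs.mul hp').add (hq.mul hq')) ?_
    convert h.join_half h' using 1; ring
  | half hN hp hq hs h =>
    subst hN
    refine .blocked (hp.mul ht rfl) (hq.mul_of_lt hp') ((hs.mul hp').add_zero (hq.mul_of_lt hq')) ?_
    convert h.join_half h' using 1; ring
  | tied hp hq hs h =>
    exact .blocked (hp.mul ht rfl) (hq.mul_of_lt hp')
      ((hs.mul_of_lt hp').zero_add (hq.mul_of_lt hq'))
      (.of_mul h.pos h.avoid h'.2.1 h'.matched_le (by omega))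
  | blocked hp hq hs h =>
    exact .blocked (hp.mul ht rfl) (hq.mul_of_lt hp')
      ((hs.mul_of_lt hp').zero_add (hq.mul_of_lt hq'))
      (.of_mul h.pos h.avoid h'.2.1 h'.matched_le (by omega))

theorem join_flat (h : TreeClass N p q s) (ht : TopCoeff t d m) (hp' : TopCoeff p' d e)
    (hq' : TopCoeff q' d z) (h' : IsFlat r m e z) :
    TreeClass (N + r) (p * t) (q * p') (s * p' + q * q') := by
  cases h with
  | free hN hp hq hs h =>
    exact .free (by omega) (hp.mul ht rfl) (hq.mul hp') ((hs.mul hp').add (hq.mul hq'))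
      (h.join_flat h')
  | half hN hp hq hs h =>
    exact .half (by omega) (hp.mul ht rfl) (hq.mul hp') ((hs.mul hp').add_zero (hq.mul_of_lt hq'))
      (h.join_flat h')
  | tied hp hq hs h =>
    exact .tied (hp.mul ht rfl) (hq.mul hp') ((hs.mul hp').add (hq.mul hq')) (h.join_flat h')
  | blocked hp hq hs h =>
    exact .blocked (hp.mul ht rfl) (by simpa using hq.mul hp' rfl)
      ((hs.mul hp').add_zero (by simpa using hq.mul hq' rfl)) (h.join_flat h')

theorem join (h : TreeClass N p q s) (h' : TreeClass N' p' q' s') :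
    TreeClass (N + N') (p * (p' + q' + s')) (q * p') (s * p' + q * q') := by
  cases h' with
  | free hN hp hq hs h' => exact hN ▸ h.join_free hp hq hs h'
  | half hN hp hq hs h' => exact hN ▸ h.join_half hp hq hs h'
  | tied hp hq hs h' => exact h.join_flat ((hp.add hq).add hs) hp hq h'.isFlat
  | blocked hp hq hs h' => exact h.join_flat ((hp.add_zero hq).add hs) hp hq h'.isFlat

theorem singleton : TreeClass 1 1 X 0 :=
  .free (d := 0) rfl ⟨by simp, by simp⟩ ⟨by simp, by simp⟩ ⟨by simp, by simp⟩
    ⟨one_pos, one_pos, .inl ⟨rfl, rfl, rfl, rfl⟩⟩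

theorem exists_topCoeff (h : TreeClass (r + 1) p q s) (hr : 0 < r) :
    ∃ d E Z, TopCoeff p d E ∧ TopCoeff q (d + 1) Z ∧ 0 < E ∧
      E + 2 * Z ≤ tripling r + surplus r := by
  cases h with
  | @free r' d E Z O hN hp hq hs h =>
    obtain rfl : r = r' := by omega
    obtain ⟨hE, -, h⟩ := h
    refine ⟨d, E, Z, hp, hq, hE, ?_⟩
    rcases h with h | h
    · omega
    · exact h.total
  | @half r' d E Z O hN hp hq hs h =>
    obtain rfl : r = r' + 1 := by omega
    obtain ⟨hE, -, h⟩ := h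
    have hφ : tripling r' ≤ tripling (r' + 1) := tripling_mono r'.le_succ
    have hφ' := tripling_pos r'
    refine ⟨d, E, 0, hp, hq.of_lt d.lt_succ_self, hE, ?_⟩
    rcases h with h | h
    · omega
    · have := h.avoid; omega
  | @tied d E Z O hp hq hs h =>
    exact ⟨d, E, 0, hp, hq.of_lt d.lt_succ_self, h.pos,
      by have := h.avoid; have := tripling_succ_le r; omega⟩
  | @blocked d E O hp hq hs h =>
    exact ⟨d, E, 0, hp, hq.of_lt d.lt_succ_self, h.pos,
      by have := h.avoid; have := tripling_succ_le r; omega⟩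

end TreeClass

section GeneratingPolynomial

theorem nbrCount_eq_card_filter (G : SimpleGraph V) (s : Finset V) (v : V) :
    nbrCount G s v = (s.filter (G.Adj v)).card := by
  rw [nbrCount, ← Set.ncard_coe_finset, Finset.coe_filter]
  rfl

theorem nbrCount_mono (G : SimpleGraph V) {s t : Finset V} (h : s ⊆ t) (v : V) :
    nbrCount G s v ≤ nbrCount G t v := by
  simp only [nbrCount_eq_card_filter]
  exact Finset.card_le_card (Finset.filter_subset_filter _ h)

theorem IsDissoc.mono {G : SimpleGraph V} {s t : Finset V} (ht : IsDissoc G t) (h : s ⊆ t) :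
    IsDissoc G s :=
  fun v hv => (nbrCount_mono G h v).trans (ht v (h hv))

theorem nbrCount_singleton_self (G : SimpleGraph V) (w : V) : nbrCount G {w} w = 0 := by
  simp [nbrCount_eq_card_filter, Finset.filter_singleton]

theorem isDissoc_empty (G : SimpleGraph V) : IsDissoc G ∅ := by simp [IsDissoc]

theorem isDissoc_singleton (G : SimpleGraph V) (w : V) : IsDissoc G {w} := by
  simp [IsDissoc, nbrCount_singleton_self]

/-- The polynomial counting, by cardinality, the subsets of `A` with property `P`. -/
noncomputable def countPoly (A : Finset V) (P : Finset V → Prop) : ℕ[X] :=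
  ∑ S ∈ A.powerset with P S, X ^ S.card

variable {A B : Finset V} {P Q R : Finset V → Prop}

theorem countPoly_congr (h : ∀ S ⊆ A, P S ↔ Q S) : countPoly A P = countPoly A Q :=
  Finset.sum_congr (Finset.filter_congr fun S hS => h S (Finset.mem_powerset.mp hS)) fun _ _ => rfl

theorem countPoly_and_add_countPoly_and_not (A : Finset V) (P Q : Finset V → Prop) :
    countPoly A (fun S => P S ∧ Q S) + countPoly A (fun S => P S ∧ ¬Q S) = countPoly A P := by
  simp only [countPoly, ← Finset.filter_filter, Finset.sum_filter_add_sum_filter_not]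

theorem coeff_countPoly (A : Finset V) (P : Finset V → Prop) (d : ℕ) :
    (countPoly A P).coeff d = {S ∈ A.powerset | P S ∧ S.card = d}.card := by
  simp only [countPoly, finsetSum_coeff, coeff_X_pow, Finset.sum_boole, Finset.filter_filter,
    Nat.cast_id, eq_comm]

theorem countPoly_singleton (w : V) (P : Finset V → Prop) :
    countPoly {w} P = (if P ∅ then 1 else 0) + if P {w} then X else 0 := by
  rw [countPoly, Finset.sum_filter, ← insert_empty_eq, Finset.sum_powerset_insert (by simp)]
  simp

theorem countPoly_union (hd : Disjoint A B)
    (h : ∀ S ⊆ A, ∀ T ⊆ B, R (S ∪ T) ↔ P S ∧ Q T) :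
    countPoly (A ∪ B) R = countPoly A P * countPoly B Q := by
  have hST {S T : Finset V} (hS : S ⊆ A) (hT : T ⊆ B) : Disjoint S T := hd.mono hS hT
  rw [countPoly, countPoly, countPoly, Finset.sum_mul_sum, ← Finset.sum_product']
  symm
  refine Finset.sum_bij' (fun p _ => p.1 ∪ p.2) (fun U _ => (U ∩ A, U ∩ B)) ?_ ?_ ?_ ?_ ?_
  · simp only [Finset.mem_product, Finset.mem_filter, Finset.mem_powerset]
    rintro ⟨S, T⟩ ⟨⟨hS, hPS⟩, hT, hQT⟩
    exact ⟨Finset.union_subset_union hS hT, (h S hS T hT).2 ⟨hPS, hQT⟩⟩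
  · simp only [Finset.mem_product, Finset.mem_filter, Finset.mem_powerset]
    rintro U ⟨hU, hRU⟩
    have := (h (U ∩ A) Finset.inter_subset_right (U ∩ B) Finset.inter_subset_right).1
    rw [← Finset.inter_union_distrib_left, Finset.inter_eq_left.2 hU] at this
    exact ⟨⟨Finset.inter_subset_right, (this hRU).1⟩, Finset.inter_subset_right, (this hRU).2⟩
  · simp only [Finset.mem_product, Finset.mem_filter, Finset.mem_powerset]
    rintro ⟨S, T⟩ ⟨⟨hS, -⟩, hT, -⟩
    have hTA : T ∩ A = ∅ := Finset.disjoint_iff_inter_eq_empty.1 (hST subset_rfl hT).symm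
    have hSB : S ∩ B = ∅ := Finset.disjoint_iff_inter_eq_empty.1 (hST hS subset_rfl)
    simp [Finset.union_inter_distrib_right, Finset.inter_eq_left.2 hS, Finset.inter_eq_left.2 hT,
      hTA, hSB]
  · simp only [Finset.mem_filter, Finset.mem_powerset]
    rintro U ⟨hU, -⟩
    rw [← Finset.inter_union_distrib_left, Finset.inter_eq_left.2 hU]
  · simp only [Finset.mem_product, Finset.mem_filter, Finset.mem_powerset]
    rintro ⟨S, T⟩ ⟨⟨hS, -⟩, hT, -⟩
    rw [Finset.card_union_of_disjoint (hST hS hT), pow_add]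

/-- Dissociation sets of `G` that avoid `w`, the first of the three states of the root of a tree. -/
def IsDissocAvoiding (G : SimpleGraph V) (w : V) (S : Finset V) : Prop :=
  IsDissoc G S ∧ w ∉ S

/-- Dissociation sets of `G` that contain `w` as an isolated vertex of the subgraph they induce. -/
def IsDissocIsolating (G : SimpleGraph V) (w : V) (S : Finset V) : Prop :=
  IsDissoc G S ∧ w ∈ S ∧ nbrCount G S w = 0

/-- Dissociation sets of `G` that contain `w` together with a (unique) neighbor. -/
def IsDissocMatching (G : SimpleGraph V) (w : V) (S : Finset V) : Prop :=
  IsDissoc G S ∧ w ∈ S ∧ nbrCount G S w = 1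

theorem countPoly_isDissoc (G : SimpleGraph V) (A : Finset V) (w : V) :
    countPoly A (IsDissoc G) = countPoly A (IsDissocAvoiding G w) +
      countPoly A (IsDissocIsolating G w) + countPoly A (IsDissocMatching G w) := by
  have hcontaining : countPoly A (fun S => IsDissoc G S ∧ w ∈ S) =
      countPoly A (IsDissocIsolating G w) + countPoly A (IsDissocMatching G w) := by
    rw [← countPoly_and_add_countPoly_and_not A _ fun S => nbrCount G S w = 0]
    refine congrArg₂ _ (countPoly_congr fun S _ => and_assoc) (countPoly_congr fun S _ => ?_)
    rw [IsDissocMatching, and_assoc]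
    refine and_congr_right fun hS => and_congr_right fun hw => ?_
    have := hS w hw
    omega
  rw [← countPoly_and_add_countPoly_and_not A (IsDissoc G) fun S => w ∈ S, hcontaining,
    add_comm, ← add_assoc]
  rfl

end GeneratingPolynomial

section Join

/-- `A` and `B` are disjoint and `wc`, with `w ∈ A` and `c ∈ B`, is the only edge of `G` between
them. -/
structure JoinedByEdge (G : SimpleGraph V) (A B : Finset V) (w c : V) : Prop where
  disjoint : Disjoint A B
  left_mem : w ∈ A
  right_mem : c ∈ B
  adj : G.Adj w c
  eq_of_adj : ∀ a ∈ A, ∀ b ∈ B, G.Adj a b → a = w ∧ b = c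

namespace JoinedByEdge

variable {G : SimpleGraph V} {A B S T : Finset V} {w c : V}

theorem symm (h : JoinedByEdge G A B w c) : JoinedByEdge G B A c w where
  disjoint := h.disjoint.symm
  left_mem := h.right_mem
  right_mem := h.left_mem
  adj := h.adj.symm
  eq_of_adj b hb a ha hba := (h.eq_of_adj a ha b hb hba.symm).symm

theorem nbrCount_union (h : JoinedByEdge G A B w c) (hS : S ⊆ A) (hT : T ⊆ B) {v : V}
    (hv : v ∈ A) :
    nbrCount G (S ∪ T) v = nbrCount G S v + if v = w ∧ c ∈ T then 1 else 0 := by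
  have hcross : T.filter (G.Adj v) = if v = w ∧ c ∈ T then {c} else ∅ := by
    ext x
    have hwc := h.adj
    have : x ∈ T → G.Adj v x → v = w ∧ x = c := fun hx => h.eq_of_adj v hv x (hT hx)
    split_ifs with hvc
    · grind
    · grind
  simp only [nbrCount_eq_card_filter, Finset.filter_union]
  rw [Finset.card_union_of_disjoint (Finset.disjoint_filter_filter (h.disjoint.mono hS hT)), hcross]
  split_ifs <;> rfl

theorem isDissoc_union (h : JoinedByEdge G A B w c) (hS : S ⊆ A) (hT : T ⊆ B) :
    IsDissoc G (S ∪ T) ↔ IsDissoc G S ∧ IsDissoc G T ∧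
      (w ∈ S → c ∈ T → nbrCount G S w = 0 ∧ nbrCount G T c = 0) := by
  have hl {v : V} (hv : v ∈ S) := h.nbrCount_union hS hT (hS hv)
  have hr {v : V} (hv : v ∈ T) := h.symm.nbrCount_union hT hS (hT hv)
  simp only [Finset.union_comm T S] at hr
  constructor
  · refine fun hU => ⟨hU.mono Finset.subset_union_left, hU.mono Finset.subset_union_right, ?_⟩
    intro hw hc
    have hUw := hU w (Finset.mem_union_left _ hw)
    have hUc := hU c (Finset.mem_union_right _ hc)
    rw [hl hw, if_pos ⟨rfl, hc⟩] at hUw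
    rw [hr hc, if_pos ⟨rfl, hw⟩] at hUc
    omega
  · rintro ⟨hdS, hdT, hwc⟩ v hv
    rcases Finset.mem_union.mp hv with hv | hv
    · rw [hl hv]
      split_ifs with hvw
      · rw [hvw.1, (hwc (hvw.1 ▸ hv) hvw.2).1]
      · exact hdS v hv
    · rw [hr hv]
      split_ifs with hvc
      · rw [hvc.1, (hwc hvc.2 (hvc.1 ▸ hv)).2]
      · exact hdT v hv

theorem notMem_right (h : JoinedByEdge G A B w c) (hT : T ⊆ B) : w ∉ T :=
  fun hw => Finset.disjoint_left.1 h.disjoint h.left_mem (hT hw)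

theorem countPoly_avoiding (h : JoinedByEdge G A B w c) :
    countPoly (A ∪ B) (IsDissocAvoiding G w) =
      countPoly A (IsDissocAvoiding G w) * countPoly B (IsDissoc G) := by
  refine countPoly_union h.disjoint fun S hS T hT => ?_
  have := h.notMem_right hT
  simp only [IsDissocAvoiding, h.isDissoc_union hS hT, Finset.mem_union]
  tauto

theorem countPoly_isolating (h : JoinedByEdge G A B w c) :
    countPoly (A ∪ B) (IsDissocIsolating G w) =
      countPoly A (IsDissocIsolating G w) * countPoly B (IsDissocAvoiding G c) := by
  refine countPoly_union h.disjoint fun S hS T hT => ?_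
  have := h.notMem_right hT
  simp only [IsDissocIsolating, IsDissocAvoiding, h.isDissoc_union hS hT, Finset.mem_union,
    h.nbrCount_union hS hT h.left_mem, true_and]
  by_cases hc : c ∈ T
  · simp [hc]
  · simp only [hc, if_false]
    tauto

theorem countPoly_matching (h : JoinedByEdge G A B w c) :
    countPoly (A ∪ B) (IsDissocMatching G w) =
      countPoly A (IsDissocMatching G w) * countPoly B (IsDissocAvoiding G c) +
        countPoly A (IsDissocIsolating G w) * countPoly B (IsDissocIsolating G c) := by
  rw [← countPoly_and_add_countPoly_and_not _ _ fun U => c ∈ U, add_comm]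
  refine congrArg₂ _ (countPoly_union h.disjoint fun S hS T hT => ?_)
    (countPoly_union h.disjoint fun S hS T hT => ?_)
  all_goals
    have hwT := h.notMem_right hT
    have hcS := h.symm.notMem_right hS
    simp only [IsDissocMatching, IsDissocIsolating, IsDissocAvoiding, h.isDissoc_union hS hT,
      Finset.mem_union, h.nbrCount_union hS hT h.left_mem, true_and]
    by_cases hc : c ∈ T
  · simp [hc]
  · simp only [hc, if_false]
    tauto
  · simp only [hc, hwT, if_true]
    grind
  · simp [hc, hcS]

end JoinedByEdge

end Join

section RootedTree

variable {G : SimpleGraph V} {A : Finset V} {w : V}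

/-- `A` induces a tree in `G`, rooted at `w`: it is built from single vertices by hanging a rooted
tree below the root of another one. -/
inductive IsRootedTree (G : SimpleGraph V) : Finset V → V → Prop
  | single (w : V) : IsRootedTree G {w} w
  | join {A B : Finset V} {w c : V} (hA : IsRootedTree G A w) (hB : IsRootedTree G B c)
      (h : JoinedByEdge G A B w c) : IsRootedTree G (A ∪ B) w

namespace IsRootedTree

theorem insert_leaf (h : IsRootedTree G A w) {x a : V} (hx : x ∉ A) (ha : a ∈ A) (hax : G.Adj a x)
    (huniq : ∀ b ∈ A, G.Adj b x → b = a) : IsRootedTree G (insert x A) w := by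
  induction h with
  | single w =>
    obtain rfl := Finset.mem_singleton.1 ha
    rw [Finset.insert_eq, Finset.union_comm]
    exact .join (.single a) (.single x) ⟨by simpa using hax.ne, by simp, by simp, hax, by simp⟩
  | @join A B w c hA hB h ihA ihB =>
    rw [Finset.mem_union, not_or] at hx
    rw [Finset.forall_mem_union] at huniq
    obtain ⟨hdisj, hw, hc, hwc, honly⟩ := h
    rcases Finset.mem_union.1 ha with haA | haB
    · rw [← Finset.insert_union]
      refine .join (ihA hx.1 haA huniq.1) hB ⟨?_, Finset.mem_insert_of_mem hw, hc, hwc, ?_⟩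
      · exact Finset.disjoint_insert_left.2 ⟨hx.2, hdisj⟩
      · refine (Finset.forall_mem_insert _ _ _).2 ⟨fun b hb hxb => ?_, honly⟩
        exact absurd haA (Finset.disjoint_right.1 hdisj (huniq.2 b hb hxb.symm ▸ hb))
    · rw [← Finset.union_insert]
      refine .join hA (ihB hx.2 haB huniq.2) ⟨?_, hw, Finset.mem_insert_of_mem hc, hwc, ?_⟩
      · exact Finset.disjoint_insert_right.2 ⟨hx.1, hdisj⟩
      · refine fun b hb => (Finset.forall_mem_insert _ _ _).2 ⟨fun hbx => ?_, honly b hb⟩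
        exact absurd haB (Finset.disjoint_left.1 hdisj (huniq.1 b hb hbx ▸ hb))

theorem treeClass (h : IsRootedTree G A w) :
    TreeClass A.card (countPoly A (IsDissocAvoiding G w)) (countPoly A (IsDissocIsolating G w))
      (countPoly A (IsDissocMatching G w)) := by
  induction h with
  | single w =>
    convert TreeClass.singleton using 1 <;>
      simp [countPoly_singleton, IsDissocAvoiding, IsDissocIsolating, IsDissocMatching,
        isDissoc_empty, isDissoc_singleton, nbrCount_singleton_self]
  | join hA hB h ihA ihB =>
    rw [Finset.card_union_of_disjoint h.disjoint, h.countPoly_avoiding, h.countPoly_isolating,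
      h.countPoly_matching, countPoly_isDissoc G _ _]
    exact ihA.join ihB

end IsRootedTree

end RootedTree

section EdgeCount

variable {G : SimpleGraph V} {B : Finset V} {x : V}

theorem nbrCount_insert (hx : x ∉ B) (v : V) :
    nbrCount G (insert x B) v = nbrCount G B v + if G.Adj v x then 1 else 0 := by
  simp only [nbrCount_eq_card_filter, Finset.card_filter, Finset.sum_insert hx, add_comm]

theorem nbrCount_pos {a : V} (ha : a ∈ B) (hax : G.Adj a x) : 0 < nbrCount G B x := by
  rw [nbrCount_eq_card_filter]
  exact Finset.card_pos.2 ⟨a, Finset.mem_filter.2 ⟨ha, hax.symm⟩⟩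

theorem eq_of_nbrCount_le_one (h : nbrCount G B x ≤ 1) {a b : V} (ha : a ∈ B) (hb : b ∈ B)
    (hxa : G.Adj x a) (hxb : G.Adj x b) : a = b := by
  rw [nbrCount_eq_card_filter] at h
  exact Finset.card_le_one.1 h a (Finset.mem_filter.2 ⟨ha, hxa⟩) b (Finset.mem_filter.2 ⟨hb, hxb⟩)

/-- The number of ordered pairs of adjacent vertices in `B`, twice the number of edges of the
subgraph induced by `B`. -/
noncomputable def adjPairs (G : SimpleGraph V) (B : Finset V) : ℕ := ∑ v ∈ B, nbrCount G B v

theorem adjPairs_insert (hx : x ∉ B) :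
    adjPairs G (insert x B) = adjPairs G B + 2 * nbrCount G B x := by
  have hcount : ∑ v ∈ B, (if G.Adj v x then 1 else 0) = nbrCount G B x := by
    simp only [nbrCount_eq_card_filter, Finset.card_filter, G.adj_comm x]
  simp only [adjPairs, Finset.sum_insert hx, nbrCount_insert hx, Finset.sum_add_distrib, hcount,
    G.irrefl, if_false]
  ring

theorem exists_adj_notMem (hG : G.Connected) (hB : B.Nonempty) (hx : x ∉ B) :
    ∃ a ∈ B, ∃ y ∉ B, G.Adj a y := by
  obtain ⟨b, hb⟩ := hB
  obtain ⟨p⟩ := hG.preconnected b x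
  obtain ⟨d, -, hfst, hsnd⟩ := p.exists_boundary_dart B hb hx
  exact ⟨d.fst, hfst, d.snd, hsnd, d.adj⟩

theorem adjPairs_univ [Fintype V] (G : SimpleGraph V) :
    adjPairs G Finset.univ = 2 * G.edgeSet.ncard := by
  rw [← SimpleGraph.coe_edgeFinset, Set.ncard_coe_finset, ← G.sum_degrees_eq_twice_card_edges]
  refine Finset.sum_congr rfl fun v _ => ?_
  rw [nbrCount_eq_card_filter, ← G.card_neighborFinset_eq_degree, G.neighborFinset_eq_filter]

theorem adjPairs_add_le [Fintype V] (hG : G.Connected) (hB : B.Nonempty) :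
    adjPairs G B + 2 * Bᶜ.card ≤ 2 * G.edgeSet.ncard := by
  induction h : Bᶜ.card generalizing B with
  | zero =>
    rw [Finset.card_eq_zero, Finset.compl_eq_empty_iff] at h
    rw [h, adjPairs_univ, mul_zero, add_zero]
  | succ m ih =>
    have hpos : 0 < Bᶜ.card := by omega
    obtain ⟨y, hy⟩ := Finset.card_pos.1 hpos
    obtain ⟨a, ha, x, hx, hax⟩ := exists_adj_notMem hG hB (Finset.mem_compl.1 hy)
    have hcard : (insert x B)ᶜ.card = m := by
      rw [Finset.compl_insert, Finset.card_erase_of_mem (Finset.mem_compl.2 hx), h,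
        Nat.add_sub_cancel]
    have := ih (Finset.insert_nonempty x B) hcard
    rw [adjPairs_insert hx] at this
    have := nbrCount_pos ha hax
    omega

theorem nbrCount_eq_one_of_card_le_adjPairs [Finite V] (hG : G.Connected)
    (hE : G.edgeSet.ncard = Nat.card V) (hB : 2 * B.card ≤ adjPairs G B) {a : V} (ha : a ∈ B)
    (hx : x ∉ B) (hax : G.Adj a x) : nbrCount G B x = 1 := by
  cases nonempty_fintype V
  have hle := adjPairs_add_le hG (Finset.insert_nonempty x B)
  have hcard := Finset.card_compl_add_card (insert x B)
  rw [hE, Nat.card_eq_fintype_card, adjPairs_insert hx] at hle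
  rw [Finset.card_insert_of_notMem hx] at hcard
  have := nbrCount_pos ha hax
  omega

end EdgeCount

section CyclicWindows

variable {k : ℕ} {p : ZMod k → Prop} [DecidablePred p]

/-- How many of the three consecutive positions `i`, `i + 1`, `i + 2` satisfy `p`. -/
def windowCount (p : ZMod k → Prop) [DecidablePred p] (i : ZMod k) : ℕ :=
  (if p i then 1 else 0) + (if p (i + 1) then 1 else 0) + if p (i + 2) then 1 else 0

theorem windowCount_eq_two_of_castHom (hk : 3 ∣ k) (j : ZMod 3)
    (h : ∀ i, p i ↔ ZMod.castHom hk (ZMod 3) i ≠ j) (i : ZMod k) : windowCount p i = 2 := by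
  have hresidue : ∀ r j : ZMod 3, (if r ≠ j then 1 else 0) + (if r + 1 ≠ j then 1 else 0) +
      (if r + 2 ≠ j then 1 else 0) = 2 := by decide
  simp only [windowCount, h, map_add, map_one, map_ofNat]
  exact hresidue (ZMod.castHom hk (ZMod 3) i) j

theorem iff_add_three (h : ∀ i, windowCount p i = 2) (i : ZMod k) : p (i + 3) ↔ p i := by
  have hfirst : i + 1 + 1 = i + 2 := by ring
  have hsecond : i + 1 + 2 = i + 3 := by ring
  have hi := h i
  have hi' := h (i + 1)
  rw [windowCount, hfirst, hsecond] at hi'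
  rw [windowCount] at hi
  grind

theorem exists_forall_iff_castHom_ne (hk : 3 ∣ k) [NeZero k] (h : ∀ i, windowCount p i = 2) :
    ∃ j, ∀ i, p i ↔ ZMod.castHom hk (ZMod 3) i ≠ j := by
  obtain ⟨a, ha⟩ : ∃ a, ¬p a := by
    by_contra! hall
    simpa [windowCount, hall] using h 0
  have hmod (n : ℕ) : p (a + n) ↔ p (a + (n % 3 : ℕ)) := by
    induction n using Nat.strong_induction_on with
    | _ n ih =>
    rcases lt_or_ge n 3 with hn | hn
    · rw [Nat.mod_eq_of_lt hn]
    · obtain ⟨m, rfl⟩ := Nat.exists_eq_add_of_le' hn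
      rw [Nat.add_mod_right, ← ih m (by omega), Nat.cast_add, ← add_assoc]
      exact iff_add_three h _
  have hwindow := h a
  simp only [windowCount, ha, if_false] at hwindow
  have hone : p (a + 1) := by grind
  have htwo : p (a + 2) := by grind
  refine ⟨ZMod.castHom hk (ZMod 3) a, fun i => ?_⟩
  obtain ⟨n, rfl⟩ : ∃ n : ℕ, i = a + n := ⟨(i - a).val, by simp⟩
  rw [hmod, map_add, map_natCast, Ne, add_eq_left, ← ZMod.natCast_mod n 3]
  have hn := Nat.mod_lt n three_pos
  interval_cases n % 3
  · simpa using ha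
  · simpa using hone
  · exact iff_of_true (by simpa using htwo) (by decide)

variable [NeZero k]

theorem sum_windowCount (p : ZMod k → Prop) [DecidablePred p] :
    ∑ i, windowCount p i = 3 * Finset.card {i | p i} := by
  have hshift (a : ZMod k) :
      ∑ i, (if p (i + a) then 1 else 0) = Finset.card {i | p i} := by
    rw [Finset.card_filter]
    exact Equiv.sum_comp (Equiv.addRight a) fun i => if p i then 1 else 0
  have hzero := hshift 0
  simp only [add_zero] at hzero
  simp only [windowCount, Finset.sum_add_distrib, hshift, hzero]
  ring

theorem three_mul_card_filter_le (h : ∀ i, windowCount p i ≤ 2) :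
    3 * Finset.card {i | p i} ≤ 2 * k := by
  rw [← sum_windowCount]
  exact (Finset.sum_le_card_nsmul _ _ 2 fun i _ => h i).trans_eq (by simp [ZMod.card, mul_comm])

theorem windowCount_eq_two (h : ∀ i, windowCount p i ≤ 2)
    (hcard : 3 * Finset.card {i | p i} = 2 * k) (i : ZMod k) : windowCount p i = 2 := by
  have hsum : ∑ i, windowCount p i = ∑ _i : ZMod k, 2 := by
    rw [sum_windowCount, hcard]
    simp [ZMod.card, mul_comm]
  exact (Finset.sum_eq_sum_iff_of_le fun i _ => h i).1 hsum i (Finset.mem_univ i)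

theorem three_mul_card_filter_eq (h : ∀ i, windowCount p i = 2) :
    3 * Finset.card {i | p i} = 2 * k := by
  rw [← sum_windowCount, Finset.sum_congr rfl fun i _ => h i]
  simp [ZMod.card, mul_comm]

end CyclicWindows

section PottedCycle

/-- `f` runs once around a cycle of `G` of length `k`, and the rest of the graph, which is nonempty,
is attached to the cycle at `f 0` only. -/
structure IsPottedCycle (G : SimpleGraph V) (k : ℕ) (f : ZMod k → V) : Prop where
  three_le : 3 ≤ k
  injective : Function.Injective f
  adj : ∀ i, G.Adj (f i) (f (i + 1))
  eq_of_adj : ∀ i ≠ 0, ∀ x, G.Adj (f i) x → x = f (i - 1) ∨ x = f (i + 1)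
  exists_notMem_range : ∃ x, x ∉ Set.range f

theorem IsPottedCycle.neZero {G : SimpleGraph V} {k : ℕ} {f : ZMod k → V}
    (h : IsPottedCycle G k f) : NeZero k :=
  ⟨(zero_lt_three.trans_le h.three_le).ne'⟩

theorem IsPottedCycle.adj_sub_one {G : SimpleGraph V} {k : ℕ} {f : ZMod k → V}
    (h : IsPottedCycle G k f) (i : ZMod k) : G.Adj (f i) (f (i - 1)) := by
  simpa using (h.adj (i - 1)).symm

theorem sub_one_ne_add_one {k : ℕ} (hk : 3 ≤ k) (i : ZMod k) : i - 1 ≠ i + 1 := by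
  intro h
  have htwo : ((2 : ℕ) : ZMod k) = 0 := by
    push_cast
    linear_combination -h
  have := Nat.le_of_dvd two_pos ((ZMod.natCast_eq_zero_iff 2 k).1 htwo)
  omega

theorem eq_or_eq_of_ncard_neighborSet_le_two [Finite V] {G : SimpleGraph V} {v a b x : V}
    (hv : (G.neighborSet v).ncard ≤ 2) (ha : G.Adj v a) (hb : G.Adj v b) (hab : a ≠ b)
    (hx : G.Adj v x) : x = a ∨ x = b := by
  have hsub : {a, b} ⊆ G.neighborSet v := Set.insert_subset ha (Set.singleton_subset_iff.2 hb)
  have heq := Set.eq_of_subset_of_ncard_le hsub (by rwa [Set.ncard_pair hab])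
  exact (heq ▸ hx : x ∈ ({a, b} : Set V))

theorem exists_adj_ne_of_two_lt_ncard {G : SimpleGraph V} {v : V}
    (hv : 2 < (G.neighborSet v).ncard) (a b : V) : ∃ x, G.Adj v x ∧ x ≠ a ∧ x ≠ b := by
  have hpair : ({a, b} : Set V).ncard ≤ 2 :=
    (Set.ncard_insert_le a {b}).trans (by rw [Set.ncard_singleton])
  obtain ⟨x, hvx, hx⟩ := Set.exists_mem_notMem_of_ncard_lt_ncard (hpair.trans_lt hv)
  exact ⟨x, hvx, by simpa [not_or] using hx⟩

section ClosedWalk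

variable {G : SimpleGraph V} {u : V} {c : G.Walk u u}

theorem getVert_val_natCast {m : ℕ} (hm : m ≤ c.length) :
    c.getVert (m : ZMod c.length).val = c.getVert m := by
  rw [ZMod.val_natCast]
  rcases hm.lt_or_eq with hm | rfl
  · rw [Nat.mod_eq_of_lt hm]
  · rw [Nat.mod_self, c.getVert_zero, c.getVert_length]

variable [NeZero c.length]

theorem adj_getVert_val (i : ZMod c.length) :
    G.Adj (c.getVert i.val) (c.getVert (i + 1).val) := by
  have hi := ZMod.val_lt i
  have hsucc : i + 1 = ((i.val + 1 : ℕ) : ZMod c.length) := by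
    rw [Nat.cast_succ, ZMod.natCast_zmod_val]
  rw [hsucc, getVert_val_natCast hi]
  exact c.adj_getVert_succ hi

theorem getVert_val_injective (hc : c.IsCycle) :
    Function.Injective fun i : ZMod c.length => c.getVert i.val := by
  intro i j hij
  have hle (i : ZMod c.length) : i.val ≤ c.length - 1 := Nat.le_sub_one_of_lt (ZMod.val_lt i)
  exact ZMod.val_injective _ (hc.getVert_injOn' (hle i) (hle j) hij)

theorem eq_getVert_val_of_adj [Finite V] (hc : c.IsCycle)
    (huniq : ∀ x ∈ c.support, 2 < (G.neighborSet x).ncard → x = u) (i : ZMod c.length) (hi : i ≠ 0)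
    (x : V) (hx : G.Adj (c.getVert i.val) x) :
    x = c.getVert (i - 1).val ∨ x = c.getVert (i + 1).val := by
  have hinj := getVert_val_injective hc
  have hpred := adj_getVert_val (i - 1)
  rw [sub_add_cancel] at hpred
  have hdeg : (G.neighborSet (c.getVert i.val)).ncard ≤ 2 := by
    by_contra! hlt
    have hiu := huniq _ (c.getVert_mem_support _) hlt
    exact hi (hinj (hiu.trans (by simp)))
  exact eq_or_eq_of_ncard_neighborSet_le_two hdeg hpred.symm (adj_getVert_val i)
    (hinj.ne (sub_one_ne_add_one hc.three_le_length i)) hx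

end ClosedWalk

theorem IsPotted.exists_isPottedCycle [Finite V] {G : SimpleGraph V} {k : ℕ} (hG : IsPotted G k) :
    ∃ f, IsPottedCycle G k f := by
  obtain ⟨-, -, v, c₀, hc₀, hk, u, ⟨hu, hdeg⟩, huniq⟩ := hG
  obtain ⟨c, hc, rfl, hsupp⟩ : ∃ c : G.Walk u u, c.IsCycle ∧ c.length = k ∧
      ∀ x ∈ c.support, x ∈ c₀.support :=
    ⟨c₀.rotate u hu, (SimpleGraph.Walk.isCycle_rotate hu).2 hc₀, by simpa using hk,
      fun x => (SimpleGraph.Walk.mem_support_rotate_iff c₀ u hu).1⟩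
  have hthree := hc.three_le_length
  have : NeZero c.length := ⟨by omega⟩
  have hinj := getVert_val_injective hc
  have hnbr := eq_getVert_val_of_adj hc fun x hx hlt => huniq x ⟨hsupp x hx, hlt⟩
  have hzero : c.getVert (0 : ZMod c.length).val = u := by rw [ZMod.val_zero, c.getVert_zero]
  refine ⟨fun i => c.getVert i.val, hthree, hinj, adj_getVert_val, hnbr, ?_⟩
  obtain ⟨x, hux, hpred_ne, hsucc_ne⟩ := exists_adj_ne_of_two_lt_ncard hdeg
    (c.getVert (-1 : ZMod c.length).val) (c.getVert (1 : ZMod c.length).val)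
  refine ⟨x, ?_⟩
  rintro ⟨i, rfl⟩
  have hi : i ≠ 0 := by
    rintro rfl
    exact hux.ne hzero.symm
  rcases hnbr i hi u hux.symm with h | h
  · have : 0 = i - 1 := hinj (hzero.trans h)
    exact hsucc_ne (by rw [eq_of_sub_eq_zero this.symm])
  · have : 0 = i + 1 := hinj (hzero.trans h)
    exact hpred_ne (by rw [eq_neg_of_add_eq_zero_left this.symm])

end PottedCycle

section PendantTree

variable {G : SimpleGraph V} {k : ℕ} [NeZero k] {f : ZMod k → V}

/-- The vertices of the cycle traversed by `f`. -/
noncomputable def cycleVerts (f : ZMod k → V) : Finset V := Finset.univ.image f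

theorem mem_cycleVerts (f : ZMod k → V) (i : ZMod k) : f i ∈ cycleVerts f :=
  Finset.mem_image_of_mem f (Finset.mem_univ i)

/-- The vertices of the tree that hangs at `f 0` when `f` traverses the cycle of a potted graph,
the root `f 0` included. -/
noncomputable def pendantTree [Fintype V] (f : ZMod k → V) : Finset V :=
  insert (f 0) (cycleVerts f)ᶜ

/-- `D` is a part of the rest of the graph that, together with `f 0`, forms a rooted tree. The edge
condition says that this tree and the cycle already contain as many edges as vertices, so that in
a connected unicyclic graph no further cycle can arise. -/
structure IsPendantPart (G : SimpleGraph V) (f : ZMod k → V) (D : Finset V) : Prop where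
  disjoint : Disjoint (cycleVerts f) D
  isRootedTree : IsRootedTree G (insert (f 0) D) (f 0)
  two_mul_card_le : 2 * (cycleVerts f ∪ D).card ≤ adjPairs G (cycleVerts f ∪ D)

namespace IsPottedCycle

theorem card_cycleVerts (h : IsPottedCycle G k f) : (cycleVerts f).card = k := by
  rw [cycleVerts, Finset.card_image_of_injective _ h.injective, Finset.card_univ, ZMod.card]

theorem card_lt_card [Fintype V] (h : IsPottedCycle G k f) : k < Fintype.card V := by
  obtain ⟨x, hx⟩ := h.exists_notMem_range
  rw [← h.card_cycleVerts]
  exact Finset.card_lt_univ_of_notMem (x := x) (by simpa [cycleVerts] using hx)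

theorem card_pendantTree [Fintype V] (h : IsPottedCycle G k f) :
    (pendantTree f).card + k = Fintype.card V + 1 := by
  have hcompl := Finset.card_compl_add_card (cycleVerts f)
  rw [h.card_cycleVerts] at hcompl
  rw [pendantTree, Finset.card_insert_of_notMem (by simp [mem_cycleVerts])]
  omega

theorem two_mul_card_le_adjPairs (h : IsPottedCycle G k f) :
    2 * (cycleVerts f).card ≤ adjPairs G (cycleVerts f) := by
  rw [adjPairs, mul_comm, ← smul_eq_mul]
  refine Finset.card_nsmul_le_sum _ _ _ (Finset.forall_mem_image.2 fun i _ => ?_)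
  rw [nbrCount_eq_card_filter]
  refine Finset.one_lt_card.2 ⟨f (i - 1), ?_, f (i + 1), ?_,
    h.injective.ne (sub_one_ne_add_one h.three_le i)⟩
  · exact Finset.mem_filter.2 ⟨mem_cycleVerts f _, h.adj_sub_one i⟩
  · exact Finset.mem_filter.2 ⟨mem_cycleVerts f _, h.adj i⟩

theorem eq_of_adj_of_notMem (h : IsPottedCycle G k f) {a x : V} (ha : a ∈ cycleVerts f)
    (hx : x ∉ cycleVerts f) (hax : G.Adj a x) : a = f 0 := by
  obtain ⟨i, -, rfl⟩ := Finset.mem_image.1 ha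
  by_contra hi
  rcases h.eq_of_adj i (fun h0 => hi (congrArg f h0)) x hax with rfl | rfl <;>
    exact hx (mem_cycleVerts f _)

theorem isPendantPart_empty (h : IsPottedCycle G k f) : IsPendantPart G f ∅ where
  disjoint := Finset.disjoint_empty_right _
  isRootedTree := by simpa using IsRootedTree.single (f 0)
  two_mul_card_le := by simpa using h.two_mul_card_le_adjPairs

theorem exists_isPendantPart_insert [Finite V] (h : IsPottedCycle G k f) (hG : G.Connected)
    (hE : G.edgeSet.ncard = Nat.card V) {D : Finset V} (hD : IsPendantPart G f D) {y : V}
    (hy : y ∉ cycleVerts f ∪ D) : ∃ x ∉ cycleVerts f ∪ D, IsPendantPart G f (insert x D) := by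
  obtain ⟨hdisj, htree, hpairs⟩ := hD
  have hroot : f 0 ∈ cycleVerts f ∪ D := Finset.mem_union_left D (mem_cycleVerts f 0)
  have hsub : insert (f 0) D ⊆ cycleVerts f ∪ D :=
    Finset.insert_subset hroot Finset.subset_union_right
  obtain ⟨a, ha, x, hx, hax⟩ := exists_adj_notMem hG ⟨f 0, hroot⟩ hy
  have hone := nbrCount_eq_one_of_card_le_adjPairs hG hE hpairs ha hx hax
  have ⟨hxC, _⟩ : x ∉ cycleVerts f ∧ x ∉ D := by simpa using hx
  have haD : a ∈ insert (f 0) D := (Finset.mem_union.1 ha).elim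
    (fun haC => h.eq_of_adj_of_notMem haC hxC hax ▸ Finset.mem_insert_self _ _)
    (Finset.mem_insert_of_mem ·)
  refine ⟨x, hx, Finset.disjoint_insert_right.2 ⟨hxC, hdisj⟩, ?_, ?_⟩
  · rw [Finset.insert_comm]
    exact htree.insert_leaf (fun hmem => hx (hsub hmem)) haD hax fun b hb hbx =>
      eq_of_nbrCount_le_one hone.le (hsub hb) ha hbx.symm hax.symm
  · rw [Finset.union_insert, adjPairs_insert hx, hone, Finset.card_insert_of_notMem hx]
    omega

theorem isRootedTree_pendantTree [Fintype V] (h : IsPottedCycle G k f) (hG : G.Connected)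
    (hE : G.edgeSet.ncard = Nat.card V) : IsRootedTree G (pendantTree f) (f 0) := by
  obtain ⟨D, hD, hmax⟩ := Finset.exists_max_image ({D | IsPendantPart G f D} : Finset (Finset V))
    Finset.card ⟨∅, by simpa using h.isPendantPart_empty⟩
  rw [Finset.mem_filter_univ] at hD
  have hcover (y : V) : y ∈ cycleVerts f ∪ D := by
    by_contra hy
    obtain ⟨x, hx, hpart⟩ := h.exists_isPendantPart_insert hG hE hD hy
    have := hmax (insert x D) (by simpa using hpart)
    rw [Finset.card_insert_of_notMem fun hxD => hx (Finset.mem_union_right _ hxD)] at this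
    omega
  have hcompl : (cycleVerts f)ᶜ = D := by
    refine Finset.Subset.antisymm (fun y hy => ?_) ?_
    · exact (Finset.mem_union.1 (hcover y)).resolve_left (Finset.mem_compl.1 hy)
    · exact Finset.subset_compl_comm.1 (Finset.subset_compl_iff_disjoint_right.2 hD.disjoint)
  rw [pendantTree, hcompl]
  exact hD.isRootedTree

end IsPottedCycle

end PendantTree

section CycleCount

variable {G : SimpleGraph V} {k : ℕ} {f : ZMod k → V} {S : Finset V}

theorem root_notMem_sdiff [NeZero k] (f : ZMod k → V) (S : Finset V) : f 0 ∉ S \ cycleVerts f :=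
  fun h => (Finset.mem_sdiff.1 h).2 (mem_cycleVerts f 0)

namespace IsPottedCycle

theorem windowCount_le_two (h : IsPottedCycle G k f) (hS : IsDissoc G S) (i : ZMod k) :
    windowCount (f · ∈ S) i ≤ 2 := by
  by_contra! hlt
  have hall : f i ∈ S ∧ f (i + 1) ∈ S ∧ f (i + 2) ∈ S := by
    rw [windowCount] at hlt
    grind
  obtain ⟨h₀, h₁, h₂⟩ := hall
  have hpred := h.adj_sub_one (i + 1)
  have hsucc := h.adj (i + 1)
  have hne := sub_one_ne_add_one h.three_le (i + 1)
  rw [add_sub_cancel_right] at hpred hne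
  rw [add_assoc, one_add_one_eq_two] at hsucc hne
  exact hne (h.injective (eq_of_nbrCount_le_one (hS _ h₁) h₀ h₂ hpred hsucc))

theorem isDissoc_of_forall_iff [NeZero k] (h : IsPottedCycle G k f) (hk : 3 ∣ k)
    (hS : ∀ i, f i ∈ S ↔ ZMod.castHom hk (ZMod 3) i ≠ 0)
    (hrest : IsDissoc G (S \ cycleVerts f)) : IsDissoc G S := by
  intro v hv
  by_cases hvC : v ∈ cycleVerts f
  · obtain ⟨i, -, rfl⟩ := Finset.mem_image.1 hvC
    have hi := (hS i).1 hv
    have hi₀ : i ≠ 0 := fun h0 => hi (by rw [h0, map_zero])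
    have hresidue : ∀ r : ZMod 3, r ≠ 0 → r - 1 ≠ 0 → r + 1 ≠ 0 → False := by decide
    have hnot_both : ¬(f (i - 1) ∈ S ∧ f (i + 1) ∈ S) := by
      rw [hS, hS, map_sub, map_add, map_one]
      exact fun hboth => hresidue _ hi hboth.1 hboth.2
    rw [nbrCount_eq_card_filter, Finset.card_le_one]
    intro a ha b hb
    rw [Finset.mem_filter] at ha hb
    rcases h.eq_of_adj i hi₀ a ha.2 with rfl | rfl <;>
      rcases h.eq_of_adj i hi₀ b hb.2 with rfl | rfl <;> grind
  · have hroot : f 0 ∉ S := by simp [hS]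
    have hsub : S.filter (G.Adj v) ⊆ (S \ cycleVerts f).filter (G.Adj v) := by
      intro x hx
      rw [Finset.mem_filter] at hx
      refine Finset.mem_filter.2 ⟨Finset.mem_sdiff.2 ⟨hx.1, fun hxC => hroot ?_⟩, hx.2⟩
      exact h.eq_of_adj_of_notMem hxC hvC hx.2.symm ▸ hx.1
    refine le_trans ?_ (hrest v (Finset.mem_sdiff.2 ⟨hv, hvC⟩))
    simp only [nbrCount_eq_card_filter]
    exact Finset.card_le_card hsub

variable [NeZero k]

theorem card_sdiff_add_card_filter (h : IsPottedCycle G k f) (S : Finset V) :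
    (S \ cycleVerts f).card + Finset.card {i | f i ∈ S} = S.card := by
  have hinter : (S ∩ cycleVerts f).card = Finset.card {i | f i ∈ S} := by
    rw [← Finset.card_image_of_injective _ h.injective, Finset.inter_comm,
      ← Finset.filter_mem_eq_inter, cycleVerts, Finset.filter_image]
  rw [← hinter, Finset.card_sdiff_add_card_inter]

theorem exists_isDissoc_three_mul_card_eq (h : IsPottedCycle G k f) (hk : 3 ∣ k) {R : Finset V}
    (hR : IsDissoc G R) (hdisj : Disjoint R (cycleVerts f)) :
    ∃ S, IsDissoc G S ∧ 3 * S.card = 2 * k + 3 * R.card := by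
  set S := R ∪ Finset.image f {i | ZMod.castHom hk (ZMod 3) i ≠ 0}
  have hS (i : ZMod k) : f i ∈ S ↔ ZMod.castHom hk (ZMod 3) i ≠ 0 := by
    rw [Finset.mem_union, h.injective.mem_finset_image, Finset.mem_filter_univ]
    exact or_iff_right (Finset.disjoint_right.1 hdisj (mem_cycleVerts f i))
  have hrest : S \ cycleVerts f = R := by
    have himage : Finset.image f {i | ZMod.castHom hk (ZMod 3) i ≠ 0} ⊆ cycleVerts f :=
      Finset.image_subset_image (Finset.filter_subset _ _)
    rw [Finset.union_sdiff_distrib, Finset.sdiff_eq_empty_iff_subset.2 himage, Finset.union_empty,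
      Finset.sdiff_eq_self_of_disjoint hdisj]
  refine ⟨S, h.isDissoc_of_forall_iff hk hS (hrest.symm ▸ hR), ?_⟩
  have hcycle := three_mul_card_filter_eq (windowCount_eq_two_of_castHom hk 0 hS)
  rw [← h.card_sdiff_add_card_filter S, hrest]
  omega

end IsPottedCycle

end CycleCount

section Maximum

theorem TopCoeff.card_filter_eq {A : Finset V} {P : Finset V → Prop} {d c : ℕ}
    (h : TopCoeff (countPoly A P) d c) : {S ∈ A.powerset | P S ∧ S.card = d}.card = c := by
  rw [← coeff_countPoly, h.coeff_eq]

theorem TopCoeff.exists_card_eq {A : Finset V} {P : Finset V → Prop} {d c : ℕ}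
    (h : TopCoeff (countPoly A P) d c) (hc : 0 < c) : ∃ S ⊆ A, P S ∧ S.card = d := by
  rw [← h.card_filter_eq] at hc
  obtain ⟨S, hS⟩ := Finset.card_pos.1 hc
  rw [Finset.mem_filter, Finset.mem_powerset] at hS
  exact ⟨S, hS⟩

theorem TopCoeff.card_le {A S : Finset V} {P : Finset V → Prop} {d c : ℕ}
    (h : TopCoeff (countPoly A P) d c) (hS : S ⊆ A) (hPS : P S) : S.card ≤ d := by
  by_contra! hlt
  have hzero := (h.of_lt hlt).card_filter_eq
  rw [Finset.card_eq_zero] at hzero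
  have hmem : S ∈ {R ∈ A.powerset | P R ∧ R.card = S.card} := by simp [hS, hPS]
  simp [hzero] at hmem

theorem isDissocIsolating_inter {G : SimpleGraph V} {S A : Finset V} {v b : V}
    (hS : IsDissoc G S) (hv : v ∈ S) (hvA : v ∈ A) (hb : b ∈ S) (hbA : b ∉ A)
    (hvb : G.Adj v b) : IsDissocIsolating G v (S ∩ A) := by
  refine ⟨hS.mono Finset.inter_subset_left, Finset.mem_inter.2 ⟨hv, hvA⟩, ?_⟩
  rw [nbrCount_eq_card_filter, Finset.card_eq_zero, Finset.filter_eq_empty_iff]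
  intro x hx hvx
  rw [Finset.mem_inter] at hx
  exact hbA (eq_of_nbrCount_le_one (hS v hv) hx.1 hb hvx hvb ▸ hx.2)

theorem IsMaxDissoc.isDissoc {G : SimpleGraph V} {S : Finset V} (hS : IsMaxDissoc G S) :
    IsDissoc G S := hS.2.1

theorem IsMaxDissoc.card_le [Finite V] {G : SimpleGraph V} {S T : Finset V}
    (hS : IsMaxDissoc G S) (hT : IsDissoc G T) : T.card ≤ S.card := by
  cases nonempty_fintype V
  rw [hS.2.2]
  refine le_csSup ⟨Fintype.card V, ?_⟩ ⟨T, Set.subset_univ _, hT, rfl⟩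
  rintro _ ⟨R, -, -, rfl⟩
  exact R.card_le_univ

theorem numMaxDissoc_eq_card [Fintype V] (G : SimpleGraph V) :
    numMaxDissoc G = Finset.card {S | IsMaxDissoc G S} := by
  rw [numMaxDissoc, numMaxDissocOn, Nat.card_eq_fintype_card, Fintype.card_subtype]
  rfl

variable [Fintype V] {G : SimpleGraph V} {k d E Z : ℕ} [NeZero k] {f : ZMod k → V} {S : Finset V}

theorem sdiff_cycleVerts_subset_pendantTree (f : ZMod k → V) (S : Finset V) :
    S \ cycleVerts f ⊆ pendantTree f := by
  rw [pendantTree, Finset.sdiff_eq_inter_compl]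
  exact Finset.inter_subset_right.trans (Finset.subset_insert _ _)

theorem inter_pendantTree_of_mem (h : f 0 ∈ S) :
    S ∩ pendantTree f = insert (f 0) (S \ cycleVerts f) := by
  rw [pendantTree, Finset.inter_insert_of_mem h, Finset.sdiff_eq_inter_compl]

theorem inter_pendantTree_of_notMem (h : f 0 ∉ S) :
    S ∩ pendantTree f = S \ cycleVerts f := by
  rw [pendantTree, Finset.inter_insert_of_notMem h, Finset.sdiff_eq_inter_compl]

namespace IsPottedCycle

theorem card_sdiff_eq_and_exists_residue (h : IsPottedCycle G k f) (hk : 3 ∣ k)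
    (hp : TopCoeff (countPoly (pendantTree f) (IsDissocAvoiding G (f 0))) d E) (hE : 0 < E)
    (hS : IsMaxDissoc G S) : (S \ cycleVerts f).card = d ∧
      ∃ j, ∀ i, f i ∈ S ↔ ZMod.castHom hk (ZMod 3) i ≠ j := by
  obtain ⟨R, hRsub, hR, rfl⟩ := hp.exists_card_eq hE
  have hRdisj : Disjoint R (cycleVerts f) := by
    have := (Finset.subset_insert_iff_of_notMem hR.2).1 hRsub
    exact (Finset.subset_compl_iff_disjoint_right.1 this)
  obtain ⟨T, hT, hTcard⟩ := h.exists_isDissoc_three_mul_card_eq hk hR.1 hRdisj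
  have hrest : (S \ cycleVerts f).card ≤ R.card :=
    hp.card_le (sdiff_cycleVerts_subset_pendantTree f S)
      ⟨hS.isDissoc.mono Finset.sdiff_subset, root_notMem_sdiff f S⟩
  have hwindow := h.windowCount_le_two hS.isDissoc
  have hcycle := three_mul_card_filter_le hwindow
  have hsum := h.card_sdiff_add_card_filter S
  have hmax := hS.card_le hT
  exact ⟨by omega, exists_forall_iff_castHom_ne hk (windowCount_eq_two hwindow (by omega))⟩

end IsPottedCycle

/-- The maximum dissociation sets that, on the cycle traversed by `f`, miss exactly the vertices
whose index is congruent to `j` modulo `3`. -/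
noncomputable def maxDissocMissing (G : SimpleGraph V) (f : ZMod k → V) (hk : 3 ∣ k) (j : ZMod 3) :
    Finset (Finset V) :=
  {S | IsMaxDissoc G S ∧ ∀ i, f i ∈ S ↔ ZMod.castHom hk (ZMod 3) i ≠ j}

theorem mem_maxDissocMissing {hk : 3 ∣ k} {j : ZMod 3} : S ∈ maxDissocMissing G f hk j ↔
    IsMaxDissoc G S ∧ ∀ i, f i ∈ S ↔ ZMod.castHom hk (ZMod 3) i ≠ j :=
  Finset.mem_filter_univ S

theorem injOn_inter_pendantTree (f : ZMod k → V) (hk : 3 ∣ k) (j : ZMod 3) :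
    Set.InjOn (· ∩ pendantTree f) (maxDissocMissing G f hk j : Set (Finset V)) := by
  intro S hS T hT hST
  have hS' := (mem_maxDissocMissing.1 hS).2
  have hT' := (mem_maxDissocMissing.1 hT).2
  ext v
  by_cases hv : v ∈ cycleVerts f
  · obtain ⟨i, -, rfl⟩ := Finset.mem_image.1 hv
    rw [hS', hT']
  · have hvtree : v ∈ pendantTree f := Finset.mem_insert_of_mem (Finset.mem_compl.2 hv)
    simpa [hvtree] using Finset.ext_iff.1 hST v

namespace IsPottedCycle

theorem card_maxDissocMissing_zero_le (h : IsPottedCycle G k f) (hk : 3 ∣ k)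
    (hp : TopCoeff (countPoly (pendantTree f) (IsDissocAvoiding G (f 0))) d E) (hE : 0 < E) :
    (maxDissocMissing G f hk 0).card ≤ E := by
  rw [← hp.card_filter_eq]
  refine Finset.card_le_card_of_injOn (· ∩ pendantTree f) (fun S hS => ?_)
    (injOn_inter_pendantTree f hk 0)
  obtain ⟨hmax, hcycle⟩ := mem_maxDissocMissing.1 hS
  have hroot : f 0 ∉ S := by simp [hcycle]
  have hcard := (h.card_sdiff_eq_and_exists_residue hk hp hE hmax).1
  rw [← inter_pendantTree_of_notMem hroot] at hcard
  exact Finset.mem_filter.2 ⟨Finset.mem_powerset.2 Finset.inter_subset_right,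
    ⟨hmax.isDissoc.mono Finset.inter_subset_left, by simp [hroot]⟩, hcard⟩

theorem exists_adj_mem_notMem_pendantTree (h : IsPottedCycle G k f) {hk : 3 ∣ k} {j : ZMod 3}
    (hS : ∀ i, f i ∈ S ↔ ZMod.castHom hk (ZMod 3) i ≠ j) :
    ∃ b ∈ S, b ∉ pendantTree f ∧ G.Adj (f 0) b := by
  have hresidue : ∀ j : ZMod 3, 1 ≠ j ∨ -1 ≠ j := by decide
  obtain ⟨i, hi, hadj⟩ : ∃ i, ZMod.castHom hk (ZMod 3) i ≠ j ∧ G.Adj (f 0) (f i) := by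
    rcases hresidue j with hj | hj
    · exact ⟨1, by rwa [map_one], by simpa using h.adj 0⟩
    · exact ⟨-1, by rwa [map_neg, map_one], by simpa using h.adj_sub_one 0⟩
  refine ⟨f i, (hS i).2 hi, ?_, hadj⟩
  simp [pendantTree, mem_cycleVerts, hadj.ne']

theorem card_maxDissocMissing_le (h : IsPottedCycle G k f) (hk : 3 ∣ k)
    (hp : TopCoeff (countPoly (pendantTree f) (IsDissocAvoiding G (f 0))) d E) (hE : 0 < E)
    (hq : TopCoeff (countPoly (pendantTree f) (IsDissocIsolating G (f 0))) (d + 1) Z)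
    {j : ZMod 3} (hj : j ≠ 0) : (maxDissocMissing G f hk j).card ≤ Z := by
  rw [← hq.card_filter_eq]
  refine Finset.card_le_card_of_injOn (· ∩ pendantTree f) (fun S hS => ?_)
    (injOn_inter_pendantTree f hk j)
  obtain ⟨hmax, hcycle⟩ := mem_maxDissocMissing.1 hS
  have hroot : f 0 ∈ S := by simpa [hcycle] using hj.symm
  obtain ⟨b, hbS, hbtree, hadj⟩ := h.exists_adj_mem_notMem_pendantTree hcycle
  have hcard : (S ∩ pendantTree f).card = d + 1 := by
    rw [inter_pendantTree_of_mem hroot, Finset.card_insert_of_notMem (root_notMem_sdiff f S),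
      (h.card_sdiff_eq_and_exists_residue hk hp hE hmax).1]
  exact Finset.mem_filter.2 ⟨Finset.mem_powerset.2 Finset.inter_subset_right,
    isDissocIsolating_inter hmax.isDissoc hroot (Finset.mem_insert_self _ _) hbS hbtree hadj, hcard⟩

theorem numMaxDissoc_le (h : IsPottedCycle G k f) (hk : 3 ∣ k)
    (hp : TopCoeff (countPoly (pendantTree f) (IsDissocAvoiding G (f 0))) d E) (hE : 0 < E)
    (hq : TopCoeff (countPoly (pendantTree f) (IsDissocIsolating G (f 0))) (d + 1) Z) :
    numMaxDissoc G ≤ E + 2 * Z := by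
  have hcover : ({S | IsMaxDissoc G S} : Finset (Finset V)) ⊆
      Finset.univ.biUnion (maxDissocMissing G f hk) := by
    intro S hS
    rw [Finset.mem_filter_univ] at hS
    obtain ⟨j, hj⟩ := (h.card_sdiff_eq_and_exists_residue hk hp hE hS).2
    exact Finset.mem_biUnion.2 ⟨j, Finset.mem_univ j, mem_maxDissocMissing.2 ⟨hS, hj⟩⟩
  have hone := h.card_maxDissocMissing_le hk hp hE hq (j := 1) (by decide)
  have htwo := h.card_maxDissocMissing_le hk hp hE hq (j := 2) (by decide)
  calc
    numMaxDissoc G = Finset.card {S | IsMaxDissoc G S} := numMaxDissoc_eq_card G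
    _ ≤ ∑ j, (maxDissocMissing G f hk j).card :=
      (Finset.card_le_card hcover).trans Finset.card_biUnion_le
    _ = (maxDissocMissing G f hk 0).card + (maxDissocMissing G f hk 1).card +
        (maxDissocMissing G f hk 2).card := Fin.sum_univ_three _
    _ ≤ E + Z + Z := by gcongr; exact h.card_maxDissocMissing_zero_le hk hp hE
    _ = E + 2 * Z := by ring

end IsPottedCycle

end Maximum

theorem IsPotted.lt_card [Fintype V] {G : SimpleGraph V} {k : ℕ} (hG : IsPotted G k) :
    k < Fintype.card V := by
  obtain ⟨f, hf⟩ := hG.exists_isPottedCycle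
  have := hf.neZero
  exact hf.card_lt_card

theorem IsPotted.numMaxDissoc_le [Fintype V] {G : SimpleGraph V} {k : ℕ} (hG : IsPotted G k)
    (hk : 3 ∣ k) :
    numMaxDissoc G ≤ tripling (Fintype.card V - k) + surplus (Fintype.card V - k) := by
  have hlt := hG.lt_card
  obtain ⟨f, hf⟩ := hG.exists_isPottedCycle
  have := hf.neZero
  have htree := (hf.isRootedTree_pendantTree hG.1 hG.2.1).treeClass
  have hcard : (pendantTree f).card = Fintype.card V - k + 1 := by
    have := hf.card_pendantTree
    omega
  rw [hcard] at htree
  obtain ⟨d, E, Z, hp, hq, hE, hle⟩ := htree.exists_topCoeff (by omega)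
  exact (hf.numMaxDissoc_le hk hp hE hq).trans hle

theorem potted_bound_k_mod3_eq_0_general {V : Type*} [Fintype V] (G : SimpleGraph V) (n k : ℕ)
    (hn : Fintype.card V = n) (hkmod : k % 3 = 0) (hG : IsPotted G k) :
    (n % 3 = 0 → numMaxDissoc G ≤ 3 ^ ((n - k) / 3) + (n - k) / 3 + 1) ∧
    (n % 3 = 1 → numMaxDissoc G ≤ 3 ^ ((n - k - 1) / 3) + 1) ∧
    (n % 3 = 2 → numMaxDissoc G ≤ 3 ^ ((n - k - 2) / 3)) := by
  have hlt := hG.lt_card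
  have hle := hG.numMaxDissoc_le (Nat.dvd_of_mod_eq_zero hkmod)
  rw [hn, tripling, surplus] at hle
  rw [hn] at hlt
  refine ⟨fun hmod => ?_, fun hmod => ?_, fun hmod => ?_⟩
  · rwa [if_pos (by omega), ← add_assoc] at hle
  · rwa [if_neg (by omega), if_pos (by omega), show (n - k) / 3 = (n - k - 1) / 3 by omega] at hle
  · rwa [if_neg (by omega), if_neg (by omega), show (n - k) / 3 = (n - k - 2) / 3 by omega] at hle

theorem potted_bound_k_mod3_eq_0 {V : Type*} [Fintype V] (G : SimpleGraph V) (n k : ℕ)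
    (hn : Fintype.card V = n) (hk0 : 0 < k) (hk3 : 3 ≤ k) (hkmod : k % 3 = 0)
    (hnk : k + 4 ≤ n) (hG : IsPotted G k) :
    (n % 3 = 0 → numMaxDissoc G ≤ 3 ^ ((n - k) / 3) + (n - k) / 3 + 1) ∧
    (n % 3 = 1 → numMaxDissoc G ≤ 3 ^ ((n - k - 1) / 3) + 1) ∧
    (n % 3 = 2 → numMaxDissoc G ≤ 3 ^ ((n - k - 2) / 3)) :=
  potted_bound_k_mod3_eq_0_general G n k hn hkmod hG
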